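/- Let ν = 2, c_R = c_W, and set c := 2c_W − n. Assume c ≥ 3, n ≥ ⌈7c/3⌉ + 4, that (n−c)/4 is an integer, and that h ≤ (n−c)/4. Then for every integer l with 0 ≤ l ≤ c−1 and 2c−l−2 ≤ (n+3c−4)/4, every (n, c_W, c_W, 2, h, 2^K, q) multi-version code with side information (for two independent K-bit versions) satisfies q^{l+1} ≥ 2^K or q^{2c−l−1} ≥ 2^{2K}; equivalently, log₂ q ≥ min{ K/(l+1) , 2K/(2c−l−1) }. -/

import Mathlib

open Finset

/-- The `h`-hop neighborhood `H_i = {i-h, …, i+h}` of server `i` on the ring `ZMod n`. -/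
noncomputable def nbhd (n h : ℕ) (i : ZMod n) : Finset (ZMod n) :=
  (Finset.Icc (-(h : ℤ)) (h : ℤ)).image (fun d : ℤ => (i + (d : ZMod n)))

/-- The set `A_S(u)` of servers that received version `u` in state `S`. -/
def received (n ν : ℕ) [NeZero n] (S : ZMod n → Finset (Fin ν)) (u : Fin ν) :
    Finset (ZMod n) :=
  Finset.univ.filter (fun j => u ∈ S j)

/-- An `(n, c_W, c_R, ν, h, 2^K, q)` multi-version code with side information.
Servers are indexed by `ZMod n`, versions by `Fin ν` (higher index = later version),
message values are `K`-bit strings `Fin K → Bool`, and stored symbols lie in `Fin q`.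
The encoder of server `i` may depend only on the states of the servers in its
`h`-hop neighborhood and on the values of the versions that server `i` received;
the decoder for a set `T` of `c_R` servers may depend only on the symbols stored by
the servers of `T`, and must return the value of some version at least as late as the
latest complete version whenever a complete version exists (and `NULL`, i.e. `none`,
otherwise). -/
structure MVCode (n cW cR ν h K q : ℕ) [NeZero n] where
  enc : ZMod n → (ZMod n → Finset (Fin ν)) → (Fin ν → (Fin K → Bool)) → Fin q
  dec : (ZMod n → Finset (Fin ν)) → Finset (ZMod n) → (ZMod n → Fin q) →
    Option (Fin K → Bool)
  enc_local_state : ∀ (i : ZMod n) (S S' : ZMod n → Finset (Fin ν))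
      (W : Fin ν → Fin K → Bool),
    (∀ j ∈ nbhd n h i, S j = S' j) → enc i S W = enc i S' W
  enc_local_word : ∀ (i : ZMod n) (S : ZMod n → Finset (Fin ν))
      (W W' : Fin ν → Fin K → Bool),
    (∀ u ∈ S i, W u = W' u) → enc i S W = enc i S W'
  dec_local : ∀ (S : ZMod n → Finset (Fin ν)) (T : Finset (ZMod n))
      (X X' : ZMod n → Fin q),
    (∀ j ∈ T, X j = X' j) → dec S T X = dec S T X'
  dec_correct : ∀ (S : ZMod n → Finset (Fin ν)) (W : Fin ν → Fin K → Bool)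
      (T : Finset (ZMod n)), T.card = cR →
    (∃ u : Fin ν, cW ≤ (received n ν S u).card) →
    ∃ m : Fin ν, (∀ u : Fin ν, cW ≤ (received n ν S u).card → u ≤ m) ∧
      dec S T (fun j => enc j S W) = some (W m)
  dec_null : ∀ (S : ZMod n → Finset (Fin ν)) (W : Fin ν → Fin K → Bool)
      (T : Finset (ZMod n)), T.card = cR →
    (∀ u : Fin ν, (received n ν S u).card < cW) →
    dec S T (fun j => enc j S W) = none

/-- Abstract three-cluster code extracted from a multi-version code. -/
structure Clus (V Y1 Y2 Y3 : Type) where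
  f1 : V → Y1
  f2 : V → Y2
  g1 : V → V → Y1
  g2 : V → V → Y2
  g3 : V → V → Y3
  D0 : Y1 → Y2 → Y3 → Option V
  D1 : Y1 → Y2 → Y3 → Option V
  D2 : Y1 → Y2 → Y3 → Option V
  h0 : ∀ a b, D0 (g1 a b) (g2 a b) (g3 a b) = some b
  h1 : ∀ a b, D1 (f1 a) (g2 a b) (g3 a b) = some a ∨ D1 (f1 a) (g2 a b) (g3 a b) = some b
  h2 : ∀ a b, D2 (f1 a) (f2 a) (g3 a b) = some a ∨ D2 (f1 a) (f2 a) (g3 a b) = some b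

theorem clus_simple {V Y1 Y2 Y3 : Type} [Fintype V] [Fintype Y1] [Fintype Y2] [Fintype Y3]
    (C : Clus V Y1 Y2 Y3) :
    Fintype.card V * Fintype.card V ≤
      Fintype.card Y1 * Fintype.card Y1 * Fintype.card Y2 * Fintype.card Y3 +
      Fintype.card Y1 * Fintype.card Y2 * Fintype.card Y2 * Fintype.card Y3 +
      Fintype.card V * (Fintype.card Y3 - 1) := by
  classical
  let E1 : Finset (V × V) := univ.filter
    (fun p => C.D1 (C.f1 p.1) (C.g2 p.1 p.2) (C.g3 p.1 p.2) = some p.1)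
  let E2 : Finset (V × V) := univ.filter
    (fun p => C.D1 (C.f1 p.1) (C.g2 p.1 p.2) (C.g3 p.1 p.2) = some p.2 ∧
      C.D2 (C.f1 p.1) (C.f2 p.1) (C.g3 p.1 p.2) = some p.1)
  let E3 : V → Finset V := fun a => univ.filter
    (fun b => C.D2 (C.f1 a) (C.f2 a) (C.g3 a b) = some b ∧ b ≠ a)
  have c1 : E1.card ≤ Fintype.card Y1 * Fintype.card Y1 * Fintype.card Y2 * Fintype.card Y3 := by
    have : E1.card ≤ (univ : Finset (Y1 × Y1 × Y2 × Y3)).card := by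
      apply Finset.card_le_card_of_injOn
        (fun p => (C.f1 p.1, C.g1 p.1 p.2, C.g2 p.1 p.2, C.g3 p.1 p.2))
      · intro x _; simp
      · rintro ⟨a, b⟩ hp ⟨a', b'⟩ hp' he
        simp only [E1, coe_filter, mem_univ, true_and, Set.mem_ofPred_eq] at hp hp'
        simp only [Prod.mk.injEq] at he
        obtain ⟨e1, e2, e3, e4⟩ := he
        have hb := C.h0 a b
        rw [e2, e3, e4, C.h0 a' b'] at hb
        rw [e1, e3, e4, hp'] at hp
        simp_all
    simpa [Fintype.card_prod, mul_assoc] using this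
  have c2 : E2.card ≤ Fintype.card Y1 * Fintype.card Y2 * Fintype.card Y2 * Fintype.card Y3 := by
    have : E2.card ≤ (univ : Finset (Y1 × Y2 × Y2 × Y3)).card := by
      apply Finset.card_le_card_of_injOn
        (fun p => (C.f1 p.1, C.f2 p.1, C.g2 p.1 p.2, C.g3 p.1 p.2))
      · intro x _; simp
      · rintro ⟨a, b⟩ hp ⟨a', b'⟩ hp' he
        simp only [E2, coe_filter, mem_univ, true_and, Set.mem_ofPred_eq] at hp hp'
        simp only [Prod.mk.injEq] at he
        obtain ⟨e1, e2, e3, e4⟩ := he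
        obtain ⟨k1, k2⟩ := hp
        rw [e1, e3, e4, hp'.1] at k1
        rw [e1, e2, e4, hp'.2] at k2
        simp_all
    simpa [Fintype.card_prod, mul_assoc] using this
  have c3 : ∀ a, (E3 a).card ≤ Fintype.card Y3 - 1 := by
    intro a
    have : (E3 a).card ≤ ((univ : Finset Y3).erase (C.g3 a a)).card := by
      apply Finset.card_le_card_of_injOn (fun b => C.g3 a b)
      · intro b hb
        simp only [E3, coe_filter, mem_univ, true_and, Set.mem_ofPred_eq] at hb
        simp only [coe_erase, coe_univ, Set.mem_sdiff, Set.mem_univ, true_and,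
          Set.mem_singleton_iff]
        intro h
        have := C.h2 a a
        rw [← h, hb.1] at this
        simp at this
        exact hb.2 this
      · intro b hb b' hb' he
        simp only [E3, coe_filter, mem_univ, true_and, Set.mem_ofPred_eq] at hb hb'
        have k := hb.1
        simp only at he
        rw [he, hb'.1] at k
        simpa using k.symm
    simpa [Finset.card_erase_of_mem] using this
  let E3' : Finset (V × V) := (univ : Finset V).biUnion (fun a => (E3 a).image (fun b => (a, b)))
  have c3' : E3'.card ≤ Fintype.card V * (Fintype.card Y3 - 1) := by
    calc E3'.card ≤ ∑ a : V, ((E3 a).image (fun b => (a, b))).card := card_biUnion_le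
      _ ≤ ∑ a : V, (Fintype.card Y3 - 1) :=
          Finset.sum_le_sum (fun a _ => card_image_le.trans (c3 a))
      _ = _ := by simp
  have hcov : (univ : Finset (V × V)) ⊆ (E1 ∪ E2) ∪ E3' := by
    rintro ⟨a, b⟩ _
    simp only [E1, E2, E3', E3, mem_union, mem_filter, mem_univ, true_and, mem_biUnion, mem_image,
      Prod.mk.injEq]
    by_cases hab : b = a
    · subst hab
      left; left
      simpa using C.h1 b b
    · rcases C.h1 a b with h | h
      · exact Or.inl (Or.inl h)
      · rcases C.h2 a b with h' | h'
        · exact Or.inl (Or.inr ⟨h, h'⟩)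
        · right; exact ⟨a, b, ⟨h', hab⟩, rfl, rfl⟩
  have := card_le_card hcov
  have u1 := card_union_le (E1 ∪ E2) E3'
  have u2 := card_union_le E1 E2
  rw [card_univ, Fintype.card_prod] at this
  omega

theorem clus_A {V Y1 Y2 Y3 : Type} [Fintype V] [Fintype Y1] [Fintype Y2] [Fintype Y3]
    (C : Clus V Y1 Y2 Y3) (M : ℕ) (k1 : Fintype.card Y1 = M) (k2 : Fintype.card Y2 = M)
    (k3 : Fintype.card Y3 = M) (hN : M * M + 2 ≤ Fintype.card V) : False := by
  classical
  obtain ⟨v, hv⟩ := Fintype.exists_lt_card_fiber_of_mul_lt_card (f := C.f1) (n := M)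
    (by rw [k1]; omega)
  obtain ⟨R, hRs, hRc⟩ := Finset.exists_subset_card_eq (Nat.succ_le_of_lt hv)
  have hR : ∀ r ∈ R, C.f1 r = v := fun r hr => by simpa using hRs hr
  obtain ⟨a, ha, b, hb, hab, hf⟩ := Finset.exists_ne_map_eq_of_card_lt_of_maps_to
    (s := R) (t := (univ : Finset Y2)) (f := C.f2) (by rw [card_univ, k2]; omega)
    (fun _ _ => mem_coe.2 (mem_univ _))
  let L : Finset V := univ.filter (fun w => ∃ y, C.D2 v (C.f2 a) y = some w)
  have hLc : L.card ≤ M := by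
    have : (L.image some) ⊆ (univ : Finset Y3).image (fun y => C.D2 v (C.f2 a) y) := by
      intro w hw
      simp only [L, mem_image, mem_filter, mem_univ, true_and] at hw ⊢
      obtain ⟨x, ⟨y, hy⟩, rfl⟩ := hw
      exact ⟨y, hy⟩
    have h1 := card_le_card this
    rw [card_image_of_injective _ (Option.some_injective V)] at h1
    exact h1.trans (card_image_le.trans (by rw [card_univ, k3]))
  have key : ∀ w, w ∉ L → C.D2 v (C.f2 a) (C.g3 a w) = some a ∧
      C.D2 v (C.f2 a) (C.g3 b w) = some b := by
    intro w hw
    have hno : ∀ y, C.D2 v (C.f2 a) y ≠ some w := by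
      intro y hy; exact hw (by simp only [L, mem_filter, mem_univ, true_and]; exact ⟨y, hy⟩)
    have p1 := C.h2 a w
    have p2 := C.h2 b w
    rw [hR a ha] at p1
    rw [hR b hb, ← hf] at p2
    exact ⟨p1.resolve_right (hno _), p2.resolve_right (hno _)⟩
  have hMlt : M < Fintype.card V := by nlinarith
  obtain ⟨w0, hw0⟩ : ∃ w0, w0 ∉ L := by
    by_contra hcon
    push Not at hcon
    have : L = univ := by ext x; simp [hcon x]
    rw [this, card_univ] at hLc
    omega
  have haL : a ∈ L := by
    simp only [L, mem_filter, mem_univ, true_and]; exact ⟨_, (key w0 hw0).1⟩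
  have hbL : b ∈ L := by
    simp only [L, mem_filter, mem_univ, true_and]; exact ⟨_, (key w0 hw0).2⟩
  have hLR : (L \ R).card + 2 ≤ M := by
    have h1 : ({a, b} : Finset V) ∪ (L \ R) ⊆ L := by
      intro x hx
      simp only [mem_union, mem_insert, mem_singleton, mem_sdiff] at hx
      rcases hx with (rfl | rfl) | hx
      · exact haL
      · exact hbL
      · exact hx.1
    have h2 : Disjoint ({a, b} : Finset V) (L \ R) := by
      rw [Finset.disjoint_left]
      intro x hx
      simp only [mem_insert, mem_singleton] at hx
      rcases hx with rfl | rfl <;> simp [ha, hb]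
    have h3 := card_le_card h1
    rw [card_union_of_disjoint h2, card_pair hab] at h3
    omega
  -- the triples used by a column
  let G : V → V → Y1 × Y2 × Y3 := fun r w => (C.g1 r w, C.g2 r w, C.g3 r w)
  let Z : V → Finset (Y1 × Y2 × Y3) := fun w => univ.filter (fun y =>
    (w ∉ R ∧ C.D1 v y.2.1 y.2.2 = some w) ∨ ∃ r ∈ R, y = G r w)
  have hdisj : ∀ w ∈ (univ : Finset V), ∀ w' ∈ (univ : Finset V), w ≠ w' →
      Disjoint (Z w) (Z w') := by
    intro w _ w' _ hne
    rw [Finset.disjoint_left]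
    intro y hy hy'
    simp only [Z, mem_filter, mem_univ, true_and] at hy hy'
    have aux : ∀ x x', x ≠ x' → (x ∉ R ∧ C.D1 v y.2.1 y.2.2 = some x) →
        (∃ r ∈ R, y = G r x') → False := by
      rintro x x' hx ⟨hxR, hl⟩ ⟨r, hr, rfl⟩
      have := C.h1 r x'
      rw [hR r hr] at this
      simp only [G] at hl
      rw [hl] at this
      simp only [Option.some.injEq] at this
      rcases this with rfl | rfl
      · exact hxR hr
      · exact hx rfl
    rcases hy with hy | hy <;> rcases hy' with hy' | hy'
    · have := hy.2.symm.trans hy'.2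
      exact hne (by simpa using this)
    · exact aux w w' hne hy hy'
    · exact aux w' w hne.symm hy' hy
    · obtain ⟨r, hr, rfl⟩ := hy
      obtain ⟨r', hr', he⟩ := hy'
      have e0 := C.h0 r w
      simp only [G, Prod.mk.injEq] at he
      rw [he.1, he.2.1, he.2.2, C.h0 r' w'] at e0
      exact hne (by simpa using e0.symm)
  have hsum : ∑ w : V, (Z w).card ≤ M * (M * M) := by
    rw [← card_biUnion hdisj]
    refine (card_le_univ _).trans ?_
    rw [Fintype.card_prod, Fintype.card_prod, k1, k2, k3]
  have hGmem : ∀ w, ∀ r ∈ R, G r w ∈ Z w := by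
    intro w r hr
    simp only [Z, mem_filter, mem_univ, true_and]
    exact Or.inr ⟨r, hr, rfl⟩
  have line : ∀ (y2 : Y2) (y3 : Y3), ((univ : Finset Y1).image (fun y1 => (y1, y2, y3))).card = M := by
    intro y2 y3
    rw [card_image_of_injective _ (by intro x x' h; simpa using h), card_univ, k1]
  have cost : ∀ w, M + 1 ≤ (Z w).card + (if w ∈ R then M else 0) +
      (if w ∈ L \ R then 1 else 0) := by
    intro w
    by_cases hwR : w ∈ R
    · have : 0 < (Z w).card := card_pos.2 ⟨_, hGmem w a ha⟩
      simp only [hwR, if_true]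
      omega
    · by_cases hlab : ∃ y2 y3, C.D1 v y2 y3 = some w
      · obtain ⟨y2, y3, hl⟩ := hlab
        have hsub : (univ : Finset Y1).image (fun y1 => (y1, y2, y3)) ⊆ Z w := by
          intro y hy
          simp only [mem_image, mem_univ, true_and] at hy
          obtain ⟨y1, rfl⟩ := hy
          simp only [Z, mem_filter, mem_univ, true_and]
          exact Or.inl ⟨hwR, hl⟩
        by_cases hwL : w ∈ L
        · have := card_le_card hsub
          rw [line] at this
          simp only [mem_sdiff, hwL, hwR, not_false_eq_true, and_self, if_true, if_false]
          omega
        · have hk := key w hwL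
          have hne : C.g3 a w ≠ C.g3 b w := by
            intro h
            rw [h, hk.2] at hk
            exact hab (by simpa using hk.1.symm)
          have : ∃ r ∈ R, C.g3 r w ≠ y3 := by
            by_cases h : C.g3 a w = y3
            · exact ⟨b, hb, fun h' => hne (h.trans h'.symm)⟩
            · exact ⟨a, ha, h⟩
          obtain ⟨r, hr, hry⟩ := this
          have hnot : G r w ∉ (univ : Finset Y1).image (fun y1 => (y1, y2, y3)) := by
            simp only [mem_image, mem_univ, true_and, G, Prod.mk.injEq, not_exists]
            rintro x ⟨_, _, h⟩
            exact hry h.symm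
          have := card_le_card (insert_subset (hGmem w r hr) hsub)
          rw [card_insert_of_notMem hnot, line] at this
          omega
      · push Not at hlab
        have hinj : Set.InjOn (fun r => G r w) (R : Set V) := by
          intro r hr r' hr' he
          simp only [G, Prod.mk.injEq] at he
          have p := (C.h1 r w)
          have p' := (C.h1 r' w)
          rw [hR r hr] at p
          rw [hR r' hr'] at p'
          have p := p.resolve_right (hlab _ _)
          have p' := p'.resolve_right (hlab _ _)
          rw [he.2.1, he.2.2, p'] at p
          simpa using p.symm
        have hsub : R.image (fun r => G r w) ⊆ Z w := by
          intro y hy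
          simp only [mem_image] at hy
          obtain ⟨r, hr, rfl⟩ := hy
          exact hGmem w r hr
        have := card_le_card hsub
        rw [card_image_of_injOn hinj, hRc] at this
        omega
  have tot := Finset.sum_le_sum (fun w (_ : w ∈ (univ : Finset V)) => cost w)
  have t1 : ∑ w : V, (if w ∈ R then M else 0) = (M + 1) * M := by
    rw [← sum_filter, filter_mem_eq_inter, univ_inter, sum_const, hRc, smul_eq_mul]
  have t2 : ∑ w : V, (if w ∈ L \ R then 1 else 0) = (L \ R).card := by
    rw [← sum_filter, filter_mem_eq_inter, univ_inter, sum_const, smul_eq_mul, mul_one]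
  have t3 : ∑ w : V, (M + 1) = Fintype.card V * (M + 1) := by
    rw [sum_const, card_univ, smul_eq_mul]
  have t4 : ∑ w : V, ((Z w).card + (if w ∈ R then M else 0) + (if w ∈ L \ R then 1 else 0)) =
      ∑ w : V, (Z w).card + (M + 1) * M + (L \ R).card := by
    rw [sum_add_distrib, sum_add_distrib, t1, t2]
  rw [t3, t4] at tot
  nlinarith

theorem nbhd_far (n h : ℕ) [NeZero n] (a : ℕ) (j : ZMod n) (hj : j ∈ nbhd n h (a : ZMod n)) :
    ((a : ℤ) - j.val ≤ h ∧ (j.val : ℤ) - a ≤ h) ∨ (n : ℤ) - h ≤ (a : ℤ) - j.val ∨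
      (n : ℤ) - h ≤ (j.val : ℤ) - a := by
  simp only [nbhd, mem_image, mem_Icc] at hj
  obtain ⟨d, ⟨d1, d2⟩, hd⟩ := hj
  have h1 : (((a : ℤ) + d - j.val : ℤ) : ZMod n) = 0 := by
    push_cast
    rw [ZMod.natCast_zmod_val, hd, sub_self]
  rw [ZMod.intCast_zmod_eq_zero_iff_dvd] at h1
  obtain ⟨k, hk⟩ := h1
  have hn : (0 : ℤ) < n := by exact_mod_cast Nat.pos_of_ne_zero (NeZero.ne n)
  rcases lt_trichotomy k 0 with hk0 | hk0 | hk0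
  · right; right
    have : (n : ℤ) * k ≤ -n := by nlinarith
    omega
  · left
    subst hk0
    constructor <;> omega
  · right; left
    have : (n : ℤ) ≤ n * k := by nlinarith
    omega

theorem card_val_filter (n : ℕ) [NeZero n] (P : ℕ → Prop) [DecidablePred P] :
    ((univ : Finset (ZMod n)).filter (fun j => P j.val)).card = ((range n).filter P).card := by
  rw [← card_image_of_injective _ (ZMod.val_injective n)]
  congr 1
  ext x
  simp only [mem_image, mem_filter, mem_univ, true_and, mem_range]
  constructor
  · rintro ⟨j, hj, rfl⟩
    exact ⟨ZMod.val_lt j, hj⟩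
  · rintro ⟨hx, hp⟩
    refine ⟨(x : ZMod n), ?_, ZMod.val_cast_of_lt hx⟩
    rw [ZMod.val_cast_of_lt hx]; exact hp

/-- The state: version 0 on the first `cW` servers; version 1 on the same servers, except on the
first cluster when `b1` holds and the second cluster when `b2` holds. -/
def clState (n cW s1 s2 m : ℕ) (b1 b2 : Bool) (j : ZMod n) : Finset (Fin 2) :=
  if cW ≤ j.val then ∅
  else if b1 = true ∧ j.val < s1 then {0}
  else if b2 = true ∧ s1 + m ≤ j.val ∧ j.val < s1 + m + s2 then {0}
  else {0, 1}

theorem reduce (n cW h c K q m s1 s2 s3 : ℕ) [NeZero n] (hnm : n = c + 4 * m)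
    (hcW : cW = c + 2 * m) (hhm : h ≤ m) (hs : s1 + s2 + s3 = c)
    (code : MVCode n cW cW 2 h K q) :
    Nonempty (Clus (Fin K → Bool) (Fin s1 → Fin q) (Fin s2 → Fin q) (Fin s3 → Fin q)) := by
  classical
  let p1 : Fin s1 → ZMod n := fun j => ((j.val : ℕ) : ZMod n)
  let p2 : Fin s2 → ZMod n := fun j => ((s1 + m + j.val : ℕ) : ZMod n)
  let p3 : Fin s3 → ZMod n := fun j => ((s1 + s2 + 2 * m + j.val : ℕ) : ZMod n)
  let P : ℕ → Prop := fun x => x < s1 ∨ (s1 + m ≤ x ∧ x < s1 + m + s2) ∨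
    (s1 + s2 + 2 * m ≤ x ∧ x < s1 + s2 + 2 * m + s3) ∨ cW ≤ x
  let T : Finset (ZMod n) := univ.filter (fun j => P j.val)
  have hT : T.card = cW := by
    rw [card_val_filter n P]
    have : (range n).filter P = ((range s1 ∪ Ico (s1 + m) (s1 + m + s2)) ∪
        Ico (s1 + s2 + 2 * m) (s1 + s2 + 2 * m + s3)) ∪ Ico cW n := by
      ext x
      simp only [P, mem_filter, mem_range, mem_union, mem_Ico]
      omega
    rw [this, card_union_of_disjoint, card_union_of_disjoint, card_union_of_disjoint]
    · simp only [card_range, Nat.card_Ico]; omega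
    all_goals
      rw [Finset.disjoint_left]
      intro x
      simp only [mem_union, mem_range, mem_Ico]
      omega
  let S : Bool → Bool → ZMod n → Finset (Fin 2) := clState n cW s1 s2 m
  have hrec0 : ∀ b1 b2, cW ≤ (received n 2 (S b1 b2) 0).card := by
    intro b1 b2
    have : received n 2 (S b1 b2) 0 = univ.filter (fun j : ZMod n => j.val < cW) := by
      ext j
      simp only [received, mem_filter, mem_univ, true_and, S, clState]
      split_ifs <;> simp <;> omega
    rw [this, card_val_filter n (fun x => x < cW)]
    have : (range n).filter (fun x => x < cW) = range cW := by
      ext x; simp only [mem_filter, mem_range]; omega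
    rw [this, card_range]
  have hrec1 : cW ≤ (received n 2 (S false false) 1).card := by
    have : received n 2 (S false false) 1 = received n 2 (S false false) 0 := by
      ext j
      simp only [received, mem_filter, mem_univ, true_and, S, clState]
      split_ifs <;> simp_all
    rw [this]; exact hrec0 _ _
  let W0 : Fin 2 → Fin K → Bool := fun _ _ => false
  let D : (ZMod n → Finset (Fin 2)) → (Fin s1 → Fin q) → (Fin s2 → Fin q) → (Fin s3 → Fin q) →
      Option (Fin K → Bool) := fun S y1 y2 y3 => code.dec S T (fun j =>
        if h1 : j.val < s1 then y1 ⟨j.val, h1⟩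
        else if h2 : s1 + m ≤ j.val ∧ j.val < s1 + m + s2 then y2 ⟨j.val - (s1 + m), by omega⟩
        else if h3 : s1 + s2 + 2 * m ≤ j.val ∧ j.val < s1 + s2 + 2 * m + s3 then
          y3 ⟨j.val - (s1 + s2 + 2 * m), by omega⟩
        else code.enc j S W0)
  have hD : ∀ b1 b2 W, D (S b1 b2) (fun j => code.enc (p1 j) (S b1 b2) W)
      (fun j => code.enc (p2 j) (S b1 b2) W) (fun j => code.enc (p3 j) (S b1 b2) W) =
      code.dec (S b1 b2) T (fun j => code.enc j (S b1 b2) W) := by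
    intro b1 b2 W
    apply code.dec_local
    intro j hj
    simp only [T, P, mem_filter, mem_univ, true_and] at hj
    split_ifs with h1 h2 h3
    · simp [p1]
    · have : p2 ⟨j.val - (s1 + m), by omega⟩ = j := by
        simp only [p2]
        rw [Nat.add_sub_cancel' h2.1, ZMod.natCast_zmod_val]
      exact congrArg (fun i => code.enc i (S b1 b2) W) this
    · have : p3 ⟨j.val - (s1 + s2 + 2 * m), by omega⟩ = j := by
        simp only [p3]
        rw [Nat.add_sub_cancel' h3.1, ZMod.natCast_zmod_val]
      exact congrArg (fun i => code.enc i (S b1 b2) W) this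
    · apply code.enc_local_word
      intro u hu
      have hc : cW ≤ j.val := by omega
      simp [S, clState, hc] at hu
  have hcor : ∀ b1 b2 (W : Fin 2 → Fin K → Bool),
      code.dec (S b1 b2) T (fun j => code.enc j (S b1 b2) W) = some (W 0) ∨
      code.dec (S b1 b2) T (fun j => code.enc j (S b1 b2) W) = some (W 1) := by
    intro b1 b2 W
    obtain ⟨u, _, hu⟩ := code.dec_correct (S b1 b2) W T hT ⟨0, hrec0 b1 b2⟩
    fin_cases u
    · exact Or.inl hu
    · exact Or.inr hu
  have hcor1 : ∀ (W : Fin 2 → Fin K → Bool),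
      code.dec (S false false) T (fun j => code.enc j (S false false) W) = some (W 1) := by
    intro W
    obtain ⟨u, hu1, hu⟩ := code.dec_correct (S false false) W T hT ⟨0, hrec0 _ _⟩
    have := hu1 1 hrec1
    fin_cases u
    · exact absurd this (by decide)
    · exact hu
  -- locality
  have l1 : ∀ b1 b2 j W, code.enc (p1 j) (S b1 b2) W = code.enc (p1 j) (S b1 false) W := by
    intro b1 b2 j W
    apply code.enc_local_state
    intro i hi
    have hf := nbhd_far n h _ i hi
    have hi2 := ZMod.val_lt i
    have hj := j.2
    have : ¬ (s1 + m ≤ i.val ∧ i.val < s1 + m + s2) := by omega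
    simp only [S, clState, this, and_false, if_false]
  have l2 : ∀ b1 b2 j W, code.enc (p2 j) (S b1 b2) W = code.enc (p2 j) (S false b2) W := by
    intro b1 b2 j W
    apply code.enc_local_state
    intro i hi
    have hf := nbhd_far n h _ i hi
    have hi2 := ZMod.val_lt i
    have hj := j.2
    have : ¬ (i.val < s1) := by omega
    simp only [S, clState, this, and_false, if_false]
  have l3 : ∀ b1 b2 j W, code.enc (p3 j) (S b1 b2) W = code.enc (p3 j) (S false false) W := by
    intro b1 b2 j W
    apply code.enc_local_state
    intro i hi
    have hf := nbhd_far n h _ i hi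
    have hi2 := ZMod.val_lt i
    have hj := j.2
    have h1 : ¬ (i.val < s1) := by omega
    have h2 : ¬ (s1 + m ≤ i.val ∧ i.val < s1 + m + s2) := by omega
    simp only [S, clState, h1, h2, and_false, if_false]
  have w1 : ∀ b j (a b' : Fin K → Bool), code.enc (p1 j) (S true b) ![a, b'] =
      code.enc (p1 j) (S true b) ![a, a] := by
    intro b j a b'
    apply code.enc_local_word
    intro u hu
    have hj := j.2
    have hval : (p1 j).val = j.val := ZMod.val_cast_of_lt (by omega)
    have h0 : ¬ cW ≤ j.val := by omega
    simp [S, clState, hval, h0] at hu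
    subst hu; rfl
  have w2 : ∀ b j (a b' : Fin K → Bool), code.enc (p2 j) (S b true) ![a, b'] =
      code.enc (p2 j) (S b true) ![a, a] := by
    intro b j a b'
    apply code.enc_local_word
    intro u hu
    have hj := j.2
    have hval : (p2 j).val = s1 + m + j.val := ZMod.val_cast_of_lt (by omega)
    have h0 : ¬ cW ≤ s1 + m + j.val := by omega
    have h1 : ¬ s1 + m + j.val < s1 := by omega
    simp only [S, clState, hval, h0, h1, and_false, if_false, true_and] at hu
    rw [if_pos (by omega)] at hu
    simp at hu
    subst hu; rfl
  refine ⟨{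
    f1 := fun a j => code.enc (p1 j) (S true false) ![a, a]
    f2 := fun a j => code.enc (p2 j) (S false true) ![a, a]
    g1 := fun a b j => code.enc (p1 j) (S false false) ![a, b]
    g2 := fun a b j => code.enc (p2 j) (S false false) ![a, b]
    g3 := fun a b j => code.enc (p3 j) (S false false) ![a, b]
    D0 := D (S false false)
    D1 := D (S true false)
    D2 := D (S true true)
    h0 := ?_
    h1 := ?_
    h2 := ?_ }⟩
  · intro a b
    rw [hD, hcor1]; rfl
  · intro a b
    have e := hD true false ![a, b]
    have hc := hcor true false ![a, b]
    rw [← e] at hc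
    simp only [w1, l2 true false, l3 true false] at hc
    exact hc
  · intro a b
    have e := hD true true ![a, b]
    have hc := hcor true true ![a, b]
    rw [← e] at hc
    simp only [l1 true true, w1, l2 true true, w2, l3 true true] at hc
    exact hc

set_option maxHeartbeats 4000000 in
/-- Theorem 4, intermediate bound: in the setting of Theorem 4
(`ν = 2`, `c_R = c_W`, `c := 2c_W - n ≥ 3`, `n ≥ ⌈7c/3⌉ + 4`, `(n-c)/4` an integer,
`h ≤ (n-c)/4`), for every integer `l` with `0 ≤ l ≤ c-1` and
`2c - l - 2 ≤ (n + 3c - 4)/4`, every `(n, c_W, c_W, 2, h, 2^K, q)` multi-version code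
with side information satisfies `q^(l+1) ≥ 2^K` or `q^(2c-l-1) ≥ 2^(2K)`, i.e.
`log₂ q ≥ min{K/(l+1), 2K/(2c-l-1)}`. -/
theorem converse_impossibility_l (n cW h c K q l : ℕ) [NeZero n]
    (hcWn : cW ≤ n) (hc : c + n = 2 * cW) (hc3 : 3 ≤ c)
    (hn : (7 * c + 2) / 3 + 4 ≤ n) (hdiv : 4 ∣ (n - c))
    (hh0 : 0 < h) (hh : h ≤ (n - c) / 4) (h2h : 2 * h + 1 ≤ n)
    (hK : 0 < K) (hq : 0 < q)
    (hl : l ≤ c - 1) (hl2 : 2 * c - l - 2 ≤ (n + 3 * c - 4) / 4)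
    (code : MVCode n cW cW 2 h K q) :
    2 ^ K ≤ q ^ (l + 1) ∨ 2 ^ (2 * K) ≤ q ^ (2 * c - l - 1) := by
  by_contra hcon
  push Not at hcon
  obtain ⟨H1, H2⟩ := hcon
  obtain ⟨m, hm⟩ := hdiv
  have hnm : n = c + 4 * m := by omega
  have hcW : cW = c + 2 * m := by omega
  have hhm : h ≤ m := by omega
  have hcardV : Fintype.card (Fin K → Bool) = 2 ^ K := by simp
  have hcardY : ∀ s, Fintype.card (Fin s → Fin q) = q ^ s := by intro s; simp
  have simple : ∀ s1 s2 s3, s1 + s2 + s3 = c → 2 ^ K * 2 ^ K ≤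
      q ^ s1 * q ^ s1 * q ^ s2 * q ^ s3 + q ^ s1 * q ^ s2 * q ^ s2 * q ^ s3 +
      2 ^ K * (q ^ s3 - 1) := by
    intro s1 s2 s3 hs
    obtain ⟨C⟩ := reduce n cW h c K q m s1 s2 s3 hnm hcW hhm hs code
    have := clus_simple C
    simpa only [hcardV, hcardY] using this
  have hq2 : 2 ≤ q := by
    by_contra hlt
    have : q = 1 := by omega
    subst this
    have := simple c 0 0 (by omega)
    have h2 : 2 ≤ 2 ^ K := by
      calc 2 = 2 ^ 1 := rfl
        _ ≤ 2 ^ K := Nat.pow_le_pow_right (by norm_num) hK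
    simp at this
    nlinarith
  have HH2 : q ^ (2 * c - l - 1) < (2 ^ K) ^ 2 := by rwa [← pow_mul, mul_comm K 2]
  have mono : ∀ i j, i ≤ j → q ^ i ≤ q ^ j := fun i j hij => Nat.pow_le_pow_right hq hij
  have sq : ∀ i, q ^ (2 * i) < (2 ^ K) ^ 2 → q ^ i < 2 ^ K := by
    intro i hi
    rw [mul_comm, pow_mul] at hi
    exact lt_of_pow_lt_pow_left₀ 2 (by positivity) hi
  have two_pow_lt : ∀ i, 2 ^ i < 2 ^ K → 2 ^ (i + 1) ≤ 2 ^ K := by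
    intro i hi
    exact Nat.pow_le_pow_right (by norm_num) ((Nat.pow_lt_pow_iff_right (by norm_num)).1 hi)
  obtain ⟨t, ht⟩ : ∃ t, c = 3 * t ∨ c = 3 * t + 1 ∨ c = 3 * t + 2 := ⟨c / 3, by omega⟩
  have ht1 : 1 ≤ t := by omega
  rcases ht with ht | ht | ht
  · -- c = 3t
    have hM : q ^ (2 * t) < 2 ^ K := by
      by_cases hlt : 2 * t ≤ l + 1
      · exact (mono _ _ hlt).trans_lt H1
      · exact sq _ ((mono _ _ (by omega)).trans_lt HH2)
    obtain ⟨C⟩ := reduce n cW h c K q m t t t hnm hcW hhm (by omega) code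
    apply clus_A C (q ^ t) (hcardY t) (hcardY t) (hcardY t)
    rw [hcardV]
    have e : q ^ (2 * t) = q ^ t * q ^ t := by rw [two_mul, pow_add]
    rw [e] at hM
    have hM2 : 2 ≤ q ^ t := hq2.trans (by simpa using mono 1 t ht1)
    generalize q ^ t = M at hM hM2
    by_contra hlt
    have heq : 2 ^ K = M * M + 1 := by omega
    have hK2 : 2 ≤ K := by
      by_contra hk
      have : K = 1 := by omega
      subst this
      nlinarith
    obtain ⟨k, rfl⟩ := Nat.exists_eq_add_of_le hK2
    rw [pow_add] at heq
    have h4 : (M * M + 1) % 4 = 0 := by rw [← heq]; omega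
    rw [Nat.add_mod, Nat.mul_mod] at h4
    have : M % 4 < 4 := Nat.mod_lt _ (by norm_num)
    interval_cases M % 4 <;> simp at h4
  · -- c = 3t+1
    have hM : q ^ (2 * t + 1) < 2 ^ K := by
      by_cases hlt : 2 * t + 1 ≤ l + 1
      · exact (mono _ _ hlt).trans_lt H1
      · exact sq _ ((mono _ _ (by omega)).trans_lt HH2)
    have hS := simple t t (t + 1) (by omega)
    have hQ : q ≤ q ^ t := by simpa using mono 1 t ht1
    have e : q ^ (2 * t + 1) = q ^ t * q ^ t * q := by rw [pow_succ, two_mul, pow_add]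
    have e1 : q ^ (t + 1) = q ^ t * q := pow_succ _ _
    have hN2 : q = 2 → 2 * (q ^ t * q ^ t * q) ≤ 2 ^ K := by
      rintro rfl
      have := two_pow_lt _ hM
      rw [pow_succ, e] at this
      linarith
    rw [e] at hM
    rw [e1] at hS
    generalize q ^ t = M at *
    generalize 2 ^ K = N at *
    have hS' : N * N ≤ 2 * (M * M * M * M * q) + N * (M * q) := by
      have : N * (M * q - 1) ≤ N * (M * q) := Nat.mul_le_mul_left _ (Nat.sub_le _ _)
      first | linarith | nlinarith
    by_cases hq3 : q = 2
    · have hN := hN2 hq3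
      subst hq3
      -- N ≥ 4 M^2, N*N ≤ 4M^4 + 2 N M
      have hA : 4 * (M * M) ≤ N := by linarith
      have hB : (4 * (M * M)) * (4 * (M * M)) ≤ N * N := Nat.mul_le_mul hA hA
      have hC : 2 * M ≤ M * M := Nat.mul_le_mul_right _ hQ
      have hD : N * (4 * (2 * M)) ≤ N * N := Nat.mul_le_mul_left _ (by linarith)
      have : 0 < M * M := by first | linarith | nlinarith
      have : 0 < (M * M) * (M * M) := by positivity
      first | linarith | nlinarith
    · have hq3 : 3 ≤ q := by omega
      have hA : M * M * q * (M * M * q) < N * N := Nat.mul_lt_mul'' hM hM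
      have hB : 3 * (M * M * M * M * q) ≤ M * M * q * (M * M * q) := by
        have := Nat.mul_le_mul_right (M * M * M * M * q) hq3
        first | linarith | nlinarith
      have hC : 3 * (M * q) ≤ N := by
        have : 3 * (M * q) ≤ M * (M * q) := Nat.mul_le_mul_right _ (by omega)
        first | linarith | nlinarith
      have hD : N * (3 * (M * q)) ≤ N * N := Nat.mul_le_mul_left _ hC
      first | linarith | nlinarith
  · -- c = 3t+2
    have hM : q ^ (4 * t + 3) < (2 ^ K) ^ 2 := by
      by_cases hlt : 2 * t + 2 ≤ l + 1
      · have : q ^ (2 * t + 2) < 2 ^ K := (mono _ _ hlt).trans_lt H1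
        have h2 : (q ^ (2 * t + 2)) ^ 2 < (2 ^ K) ^ 2 := Nat.pow_lt_pow_left this (by norm_num)
        rw [← pow_mul] at h2
        exact (mono _ _ (by omega)).trans_lt h2
      · exact (mono _ _ (by omega)).trans_lt HH2
    have hS := simple t t (t + 2) (by omega)
    have hQ : q ≤ q ^ t := by simpa using mono 1 t ht1
    have e : q ^ (4 * t + 3) = q ^ t * q ^ t * q ^ t * q ^ t * (q * q * q) := by ring
    have e1 : q ^ (t + 2) = q ^ t * (q * q) := by ring
    have hN2 : q = 2 → 4 * (q ^ t * q ^ t) ≤ 2 ^ K := by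
      rintro rfl
      have h1 : 2 ^ (2 * t + 1) < 2 ^ K := by
        apply sq
        exact (mono _ _ (by omega)).trans_lt hM
      have := two_pow_lt _ h1
      calc 4 * (2 ^ t * 2 ^ t) = 2 ^ (2 * t + 1 + 1) := by ring
        _ ≤ _ := this
    have hN3 : q = 3 → t = 1 → 64 ≤ 2 ^ K := by
      rintro rfl rfl
      have h1 : 2 ^ 5 < 2 ^ K := by
        by_contra hle
        push Not at hle
        have : (2 ^ K) ^ 2 ≤ (2 ^ 5) ^ 2 := Nat.pow_le_pow_left hle 2
        norm_num at hM this
        omega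
      have := two_pow_lt _ h1
      norm_num at this
      exact this
    have hT2 : t ≠ 1 → q * q ≤ q ^ t := by
      intro h
      rw [← pow_two]; exact mono 2 t (by omega)
    have hT1 : t = 1 → q ^ t = q := by rintro rfl; simp
    rw [e] at hM
    rw [e1] at hS
    have hN0 : 0 < 2 ^ K := by positivity
    generalize q ^ t = M at *
    generalize 2 ^ K = N at *
    have hpos : 0 < M * (q * q) := by
      have : 0 < M := by omega
      positivity
    have hS' : N * N + N ≤ 2 * (M * M * M * M * (q * q)) + N * (M * (q * q)) := by
      have : N * (M * (q * q) - 1) + N = N * (M * (q * q)) := by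
        rw [← Nat.mul_succ]
        congr 1
        omega
      first | linarith | nlinarith
    rw [pow_two] at hM
    by_cases hq2' : q = 2
    · have hN := hN2 hq2'
      subst hq2'
      have hB : (4 * (M * M)) * (4 * (M * M)) ≤ N * N := Nat.mul_le_mul hN hN
      have hC : 2 * M ≤ M * M := Nat.mul_le_mul_right _ hQ
      have hD : N * (2 * (4 * M)) ≤ N * N := Nat.mul_le_mul_left _ (by linarith)
      first | linarith | nlinarith
    · by_cases hq4 : 4 ≤ q
      · have hA : 4 * (M * M * M * M * (q * q)) ≤ M * M * M * M * (q * q * q) := by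
          have := Nat.mul_le_mul_right (M * M * M * M * (q * q)) hq4
          first | linarith | nlinarith
        have hB : 2 * (M * (q * q)) ≤ N := by
          by_contra hlt
          push Not at hlt
          have h1 : N * N < (2 * (M * (q * q))) * (2 * (M * (q * q))) := Nat.mul_lt_mul'' hlt hlt
          have h2 : q * q ≤ M * M := Nat.mul_le_mul hQ hQ
          have h3 : (M * M * (q * q * q)) * (q * q) ≤ (M * M * (q * q * q)) * (M * M) :=
            Nat.mul_le_mul_left _ h2
          have h4 : 4 * (M * M * (q * q * q * q)) ≤ q * (M * M * (q * q * q * q)) :=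
            Nat.mul_le_mul_right _ hq4
          first | linarith | nlinarith
        have hD : N * (2 * (M * (q * q))) ≤ N * N := Nat.mul_le_mul_left _ hB
        first | linarith | nlinarith
      · have hq3 : q = 3 := by omega
        by_cases ht' : t = 1
        · have hN := hN3 hq3 ht'
          have hM' := hT1 ht'
          subst hq3
          subst hM'
          first | linarith | nlinarith
        · have hM' := hT2 ht'
          subst hq3
          -- 27 M^4 < N^2, M ≥ 9
          have hB : 5 * (9 * M) ≤ N := by
            by_contra hlt
            push Not at hlt
            have h1 : N * N < (5 * (9 * M)) * (5 * (9 * M)) := Nat.mul_lt_mul'' hlt hlt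
            have h2 : 9 * 9 ≤ M * M := Nat.mul_le_mul hM' hM'
            have h3 : (M * M) * (9 * 9) ≤ (M * M) * (M * M) := Nat.mul_le_mul_left _ h2
            first | linarith | nlinarith
          have hD : N * (5 * (9 * M)) ≤ N * N := Nat.mul_le_mul_left _ hB
          first | linarith | nlinarith
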